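/- arXiv:1004.5270 — 3 statements merged into one kernel-verified Lean document; each statement's English description precedes it below -/
import Mathlib

section
/- If an action φ of ℤ² on ℝ² by homeomorphisms is minimal, then it is free: for every n ∈ ℤ × ℤ with n ≠ (0,0), the homeomorphism φ(n) has no fixed point. -/
/-!
If `φ n` has a fixed point, then by commutativity it fixes a whole dense orbit, so `φ n = id`. With
`u` perpendicular to `n`, the vectors `n` and `2u` span a subgroup of finite index in `ℤ²`, so by
Baire's theorem every point is an accumulation point of its orbit under `φ (2u) = φ u ∘ φ u`. But
`φ (2u)` preserves orientation and has no fixed point (otherwise it would be the identity too), and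
by a theorem of Brouwer every point is wandering for such a homeomorphism.

To prove Brouwer's theorem, note that if a fixed-point-free orientation-preserving `h` returned to a
small disk, then composing it with a map supported in that disk would create a periodic point
without creating a fixed point. Period two is excluded by counting turns: since `h z - z` has a
continuous logarithm, applying `h` twice makes the chord from `x` to `h x` turn by zero in total,
whereas two reversals of a chord by an orientation-preserving map add up to an odd number of full
turns. Longer periods are shortened one at a time, by pushing the periodic point, inside the maximal
free disk around it, onto a free arc that ends at its image.
-/

open Complex Filter Function Metric Set Topology
open scoped AddConstMap NNReal Real

/-! ### The degree of an injective map of the plane -/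

theorem eq_of_exp_comp_eq {X : Type*} [TopologicalSpace X] [PreconnectedSpace X] {E : X → ℂ}
    (hE : Continuous E) (hexp : ∀ x y, exp (E x) = exp (E y)) (x y : X) : E x = E y :=
  congrFun (isCoveringMap_exp.eq_of_comp_eq hE continuous_const
    (funext fun z ↦ Subtype.ext (hexp z y)) y rfl) x

theorem exists_continuous_exp_eq {X : Type*} [TopologicalSpace X] [SimplyConnectedSpace X]
    [LocallyPathConnectedSpace X] {g : X → ℂ} (hg : Continuous g) (hg₀ : ∀ x, g x ≠ 0) :
    ∃ E : X → ℂ, Continuous E ∧ ∀ x, exp (E x) = g x := by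
  obtain ⟨x₀⟩ : Nonempty X := inferInstance
  obtain ⟨E, ⟨-, hE⟩, -⟩ := isCoveringMapOn_exp.existsUnique_continuousMap_lifts ⟨g, hg⟩
    (exp_log (hg₀ x₀)) hg₀
  exact ⟨E, E.continuous, congrFun hE⟩

/-- `A` lifts, through `exp`, the action of `f` on chords: the chord from `x` to `x + exp s` is sent
to the one from `f x` to `f x + exp (A (x, s))`. The integer `d` counts the turns of the image
chord when the chord makes one turn. -/
structure IsChordLift (f : ℂ → ℂ) (d : ℤ) (A : ℂ × ℂ → ℂ) : Prop where
  continuous : Continuous A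
  exp_apply : ∀ x s, exp (A (x, s)) = f (x + exp s) - f x
  apply_add_two_pi_mul_I : ∀ x s, A (x, s + 2 * π * I) = A (x, s) + d • (2 * π * I)

/-- The degree of an injective self-map of the plane, in terms of how it turns chords.
Orientation-preserving homeomorphisms are those of degree `1`. -/
def HasDegree (f : ℂ → ℂ) (d : ℤ) : Prop :=
  ∃ A, IsChordLift f d A

namespace IsChordLift

variable {f g : ℂ → ℂ} {d e : ℤ} {A B : ℂ × ℂ → ℂ}

theorem apply_add_zsmul (hA : IsChordLift f d A) (x s : ℂ) (j : ℤ) :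
    A (x, s + j • (2 * π * I)) = A (x, s) + j • d • (2 * π * I) :=
  AddConstMapClass.map_add_zsmul
    (⟨fun s ↦ A (x, s), hA.apply_add_two_pi_mul_I x⟩ : ℂ →+c[2 * π * I, d • (2 * π * I)] ℂ) s j

theorem comp (hB : IsChordLift g e B) (hA : IsChordLift f d A) (hf : Continuous f) :
    IsChordLift (g ∘ f) (d * e) fun p ↦ B (f p.1, A p) where
  continuous := hB.continuous.comp (by have := hA.continuous; fun_prop)
  exp_apply x s := by simp only [hB.exp_apply, hA.exp_apply, comp_apply, add_sub_cancel]
  apply_add_two_pi_mul_I x s := by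
    simp only [hA.apply_add_two_pi_mul_I, hB.apply_add_zsmul, mul_smul]

theorem degree_unique (hA : IsChordLift f d A) (hB : IsChordLift f e B) : d = e := by
  have hcont : Continuous fun p ↦ A p - B p := hA.continuous.sub hB.continuous
  have hexp : ∀ p, exp (A p - B p) = 1 := fun ⟨x, s⟩ ↦ by
    rw [exp_sub, hA.exp_apply, ← hB.exp_apply, div_self (exp_ne_zero _)]
  have hturn := eq_of_exp_comp_eq hcont (fun p q ↦ by rw [hexp, hexp])
    ((0, 0 + 2 * π * I) : ℂ × ℂ) (0, 0)
  rw [hA.apply_add_two_pi_mul_I, hB.apply_add_two_pi_mul_I, add_sub_add_comm,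
    add_eq_left, sub_eq_zero] at hturn
  exact smul_left_injective ℤ two_pi_I_ne_zero hturn

-- Reversing a chord twice amounts to one full turn.
theorem apply_reverse (hA : IsChordLift f d A) (x s : ℂ) :
    A (x + exp s, s + π * I) = A (x, s) + d • (π * I) := by
  have hexp_pi : ∀ s, exp (s + π * I) = -exp s := fun s ↦ by
    rw [exp_add, exp_pi_mul_I, mul_neg_one]
  let turn : ℂ × ℂ → ℂ := fun p ↦ A (p.1 + exp p.2, p.2 + π * I) - A p
  have hcont : Continuous turn := by
    have := hA.continuous
    fun_prop
  have hexp : ∀ p, exp (turn p) = -1 := fun ⟨x, s⟩ ↦ by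
    have hne := exp_ne_zero (A (x, s))
    rw [hA.exp_apply] at hne
    rw [exp_sub, hA.exp_apply, hA.exp_apply, hexp_pi, add_neg_cancel_right,
      div_eq_iff hne, neg_one_mul, neg_sub]
  have htwice : turn (x, s) + turn (x + exp s, s + π * I) = d • (2 * π * I) := by
    have hshift : s + π * I + π * I = s + 2 * π * I := by ring
    simp only [turn, hexp_pi, add_neg_cancel_right, hshift, hA.apply_add_two_pi_mul_I]
    abel
  have hconst : turn (x + exp s, s + π * I) = turn (x, s) :=
    eq_of_exp_comp_eq hcont (fun p q ↦ by rw [hexp, hexp]) _ _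
  rw [hconst] at htwice
  simp only [turn, zsmul_eq_mul] at htwice ⊢
  linear_combination htwice / 2

end IsChordLift

theorem exists_hasDegree {f : ℂ → ℂ} (hf : Continuous f) (hinj : Injective f) :
    ∃ d, HasDegree f d := by
  have hchord : ∀ p : ℂ × ℂ, f (p.1 + exp p.2) - f p.1 ≠ 0 := fun p ↦
    sub_ne_zero.2 <| hinj.ne <| by simp
  obtain ⟨A, hA, hexpA⟩ := exists_continuous_exp_eq (by fun_prop) hchord
  let turn : ℂ × ℂ → ℂ := fun p ↦ A (p.1, p.2 + 2 * π * I) - A p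
  have hexp : ∀ p, exp (turn p) = 1 := fun p ↦ by
    rw [exp_sub, hexpA, hexpA, exp_periodic, div_self (hchord p)]
  obtain ⟨d, hd⟩ := exp_eq_one_iff.1 (hexp (0, 0))
  refine ⟨d, A, hA, fun x s ↦ hexpA (x, s), fun x s ↦ ?_⟩
  have hconst : turn (x, s) = turn (0, 0) :=
    eq_of_exp_comp_eq (by fun_prop) (fun p q ↦ by rw [hexp, hexp]) _ _
  rw [zsmul_eq_mul, ← hd, ← hconst, add_sub_cancel]

namespace HasDegree

variable {f g : ℂ → ℂ} {d e : ℤ}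

protected theorem comp (hg : HasDegree g e) (hf : HasDegree f d) (hfc : Continuous f) :
    HasDegree (g ∘ f) (d * e) :=
  let ⟨_, hB⟩ := hg
  let ⟨_, hA⟩ := hf
  ⟨_, hB.comp hA hfc⟩

theorem unique (hd : HasDegree f d) (he : HasDegree f e) : d = e :=
  let ⟨_, hA⟩ := hd
  let ⟨_, hB⟩ := he
  hA.degree_unique hB

protected theorem id : HasDegree id 1 :=
  ⟨Prod.snd, continuous_snd, fun x s ↦ by simp, fun x s ↦ by simp⟩

theorem homeomorph_comp_self (f : ℂ ≃ₜ ℂ) : HasDegree (f ∘ f) 1 := by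
  obtain ⟨d, hd⟩ := exists_hasDegree f.continuous f.injective
  obtain ⟨e, he⟩ := exists_hasDegree f.symm.continuous f.symm.injective
  have hinv : d * e = 1 :=
    (he.comp hd f.continuous).unique (f.symm_comp_self ▸ HasDegree.id)
  have hsq : d * d = 1 := by
    rcases Int.eq_one_or_neg_one_of_mul_eq_one hinv with rfl | rfl <;> rfl
  exact hsq ▸ hd.comp hd f.continuous

/-- A continuous logarithm `M` of the displacement `f z - z` is `f`-invariant up to the lift `A`;
at a point of period two this forces the half-turns of the chord and of its image to cancel. -/
theorem eq_neg_one_of_apply_apply_eq (hd : HasDegree f d) (hf : Continuous f)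
    (hfix : ∀ z, f z ≠ z) {x : ℂ} (hx : f (f x) = x) : d = -1 := by
  obtain ⟨A, hA⟩ := hd
  obtain ⟨M, hM, hexpM⟩ := exists_continuous_exp_eq (g := fun z ↦ f z - z) (by fun_prop)
    fun z ↦ sub_ne_zero.2 (hfix z)
  have hadd : ∀ z, z + exp (M z) = f z := fun z ↦ by rw [hexpM, add_sub_cancel]
  have hexp : ∀ z, exp (A (z, M z) - M (f z)) = 1 := fun z ↦ by
    rw [exp_sub, hA.exp_apply, hadd, hexpM, div_self (sub_ne_zero.2 (hfix _))]
  have hinvariant : A (f x, M (f x)) - M (f (f x)) = A (x, M x) - M (f x) :=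
    eq_of_exp_comp_eq (E := fun z ↦ A (z, M z) - M (f z))
      (by have := hA.continuous; fun_prop) (fun z w ↦ by rw [hexp, hexp]) _ _
  obtain ⟨j, hj⟩ : ∃ j : ℤ, M (f x) = M x + π * I + j * (2 * π * I) := by
    refine exp_eq_exp_iff_exists_int.1 ?_
    rw [exp_add, exp_pi_mul_I, hexpM, hexpM, hx]
    ring
  have hturn : A (f x, M (f x)) = A (x, M x) + d • (π * I) + j • d • (2 * π * I) := by
    rw [hj, ← zsmul_eq_mul, hA.apply_add_zsmul, ← hadd x, hA.apply_reverse]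
  have hcancel : (d + 1) * (2 * j + 1) = 0 := by
    have hpi : (π * I : ℂ) ≠ 0 := mul_ne_zero (ofReal_ne_zero.2 Real.pi_ne_zero) I_ne_zero
    have : (((d + 1) * (2 * j + 1) : ℤ) : ℂ) * (π * I) = 0 := by
      rw [hx] at hinvariant
      simp only [zsmul_eq_mul] at hturn
      push_cast
      linear_combination hinvariant - hturn - hj
    exact_mod_cast (mul_eq_zero.1 this).resolve_right hpi
  rcases mul_eq_zero.1 hcancel with h | h <;> omega

end HasDegree

theorem hasDegree_one_of_lipschitzWith_sub_self {c : ℝ≥0} (hc : c < 1) {f : ℂ → ℂ}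
    (hf : LipschitzWith c fun z ↦ f z - z) : HasDegree f 1 := by
  have hcont : Continuous f :=
    (hf.continuous.add continuous_id).congr fun z ↦ sub_add_cancel (f z) z
  let ratio : ℂ × ℂ → ℂ := fun p ↦ (f (p.1 + exp p.2) - f p.1) / exp p.2
  have hslit : ∀ p, ratio p ∈ slitPlane := fun ⟨x, s⟩ ↦ by
    have hexp : 0 < ‖exp s‖ := norm_pos_iff.2 (exp_ne_zero s)
    have hdiff : ratio (x, s) - 1 = (f (x + exp s) - (x + exp s) - (f x - x)) / exp s := by
      simp only [ratio]
      field_simp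
      ring
    refine ball_one_subset_slitPlane ?_
    rw [mem_ball, dist_eq_norm, hdiff, norm_div, div_lt_one hexp]
    calc ‖f (x + exp s) - (x + exp s) - (f x - x)‖ ≤ c * ‖x + exp s - x‖ := hf.norm_sub_le _ _
      _ = c * ‖exp s‖ := by rw [add_sub_cancel_left]
      _ < ‖exp s‖ := mul_lt_of_lt_one_left hexp (by exact_mod_cast hc)
  have hratio : Continuous ratio := by
    refine Continuous.div ?_ ?_ fun p ↦ exp_ne_zero _ <;> fun_prop
  refine ⟨fun p ↦ p.2 + log (ratio p), continuous_snd.add (hratio.clog hslit), fun x s ↦ ?_,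
    fun x s ↦ ?_⟩
  · rw [exp_add, exp_log (slitPlane_ne_zero (hslit _)), mul_div_cancel₀ _ (exp_ne_zero s)]
  · simp only [ratio, exp_periodic s, one_smul]
    ring

section Bump

variable {E : Type*} [NormedAddCommGroup E] [NormedSpace ℝ E]

theorem exists_homeomorph_coe_eq_of_lipschitzWith_sub_self [CompleteSpace E] {c : ℝ≥0} (hc : c < 1)
    {f : E → E} (hf : LipschitzWith c fun z ↦ f z - z) : ∃ g : E ≃ₜ E, ⇑g = f := by
  have happrox : ApproximatesLinearOn f (ContinuousLinearEquiv.refl ℝ E : E →L[ℝ] E) univ c :=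
    fun x _ y _ ↦ by simpa only [ContinuousLinearEquiv.coe_refl, ContinuousLinearMap.coe_id',
      id_eq, sub_sub_sub_comm] using hf.norm_sub_le x y
  refine ⟨happrox.toHomeomorph f ?_, rfl⟩
  rcases subsingleton_or_nontrivial E with hE | hE
  · exact .inl hE
  · refine .inr ?_
    simpa [ContinuousLinearMap.nnnorm_id] using hc

/-- The map `z ↦ z + β z • v`, where `β` is the tent function of height `1` over `ball c r`; it
pushes `c` to `c + v` without moving any point outside the ball. -/
noncomputable def bumpTranslate (c v : E) (r : ℝ) (z : E) : E :=
  z + max (1 - dist z c / r) 0 • v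

theorem bumpTranslate_self (c v : E) (r : ℝ) : bumpTranslate c v r c = c + v := by
  simp [bumpTranslate]

theorem bumpTranslate_of_notMem_ball {c v z : E} {r : ℝ} (hr : 0 < r) (hz : z ∉ ball c r) :
    bumpTranslate c v r z = z := by
  have : 1 ≤ dist z c / r := (one_le_div hr).2 (not_lt.1 hz)
  rw [bumpTranslate, max_eq_right (by linarith), zero_smul, add_zero]

theorem lipschitzWith_bumpTranslate_sub_self (c v : E) {r : ℝ} (hr : 0 < r) :
    LipschitzWith (‖v‖₊ / r.toNNReal) fun z ↦ bumpTranslate c v r z - z := by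
  refine LipschitzWith.of_dist_le_mul fun x y ↦ ?_
  have htent : |max (1 - dist x c / r) 0 - max (1 - dist y c / r) 0| ≤ dist x y / r :=
    calc _ ≤ |(1 - dist x c / r) - (1 - dist y c / r)| := abs_max_sub_max_le_abs _ _ _
      _ = |dist x c - dist y c| / r := by
          rw [sub_sub_sub_cancel_left, ← sub_div, abs_div, abs_of_pos hr, abs_sub_comm]
      _ ≤ dist x y / r := by gcongr; exact abs_dist_sub_le x y c
  calc dist (bumpTranslate c v r x - x) (bumpTranslate c v r y - y)
      = |max (1 - dist x c / r) 0 - max (1 - dist y c / r) 0| * ‖v‖ := by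
        simp only [bumpTranslate, add_sub_cancel_left, dist_eq_norm, ← sub_smul, norm_smul,
          Real.norm_eq_abs]
    _ ≤ dist x y / r * ‖v‖ := by gcongr
    _ = (‖v‖₊ / r.toNNReal : ℝ≥0) * dist x y := by
        rw [NNReal.coe_div, coe_nnnorm, Real.coe_toNNReal r hr.le]
        ring

end Bump

theorem exists_hasDegree_one_apply_eq_of_dist_lt {a b : ℂ} {r : ℝ} (hab : dist a b < r) :
    ∃ g : ℂ ≃ₜ ℂ, HasDegree g 1 ∧ EqOn g id (ball a r)ᶜ ∧ g a = b := by
  have hr : 0 < r := dist_nonneg.trans_lt hab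
  have hlip := lipschitzWith_bumpTranslate_sub_self a (b - a) hr
  have hlt : ‖b - a‖₊ / r.toNNReal < 1 := by
    rw [← NNReal.coe_lt_coe, NNReal.coe_div, coe_nnnorm, Real.coe_toNNReal r hr.le, NNReal.coe_one,
      div_lt_one hr, ← dist_eq_norm']
    exact hab
  obtain ⟨g, hg⟩ := exists_homeomorph_coe_eq_of_lipschitzWith_sub_self hlt hlip
  refine ⟨g, ?_, fun z hz ↦ ?_, ?_⟩
  · exact hg ▸ hasDegree_one_of_lipschitzWith_sub_self hlt hlip
  · exact hg ▸ bumpTranslate_of_notMem_ball hr hz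
  · rw [hg, bumpTranslate_self, add_sub_cancel]

theorem exists_hasDegree_one_apply_eq_of_isPreconnected {D : Set ℂ} (hD : IsOpen D)
    (hconn : IsPreconnected D) {a b : ℂ} (ha : a ∈ D) (hb : b ∈ D) :
    ∃ g : ℂ ≃ₜ ℂ, HasDegree g 1 ∧ EqOn g id Dᶜ ∧ g a = b := by
  refine hconn.induction₂' (fun a b ↦ ∃ g : ℂ ≃ₜ ℂ, HasDegree g 1 ∧ EqOn g id Dᶜ ∧ g a = b)
    (fun x hx ↦ ?_) ?_ ha hb
  · obtain ⟨r, hr, hball⟩ := Metric.isOpen_iff.1 hD x hx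
    filter_upwards [mem_nhdsWithin_of_mem_nhds (ball_mem_nhds x (half_pos hr))] with y hy
    have hyx : dist y x < r / 2 := hy
    have hball_y : ball y (r / 2) ⊆ D := (ball_subset_ball' (by linarith)).trans hball
    constructor
    · obtain ⟨g, hdeg, hsupp, hgx⟩ := exists_hasDegree_one_apply_eq_of_dist_lt (a := x) (b := y)
        (r := r) (by rw [dist_comm]; linarith)
      exact ⟨g, hdeg, hsupp.mono (compl_subset_compl.2 hball), hgx⟩
    · obtain ⟨g, hdeg, hsupp, hgy⟩ := exists_hasDegree_one_apply_eq_of_dist_lt hyx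
      exact ⟨g, hdeg, hsupp.mono (compl_subset_compl.2 hball_y), hgy⟩
  · rintro x y z - - - ⟨g, hg, hg_supp, hgx⟩ ⟨k, hk, hk_supp, hky⟩
    refine ⟨g.trans k, hk.comp hg g.continuous, fun w hw ↦ ?_, ?_⟩
    · rw [Homeomorph.trans_apply, hg_supp hw, id_eq, hk_supp hw, id_eq]
    · rw [Homeomorph.trans_apply, hgx, hky]

/-! ### Free sets -/

/-- A set is free for `h` if it is disjoint from its image; a perturbation of `h` supported in a
free set creates no fixed point. -/
def IsFree {X : Type*} (h : X → X) (K : Set X) : Prop :=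
  MapsTo h K Kᶜ

namespace IsFree

variable {X : Type*} {h : X → X} {K L B : Set X}

theorem mono (hL : IsFree h L) (hKL : K ⊆ L) : IsFree h K :=
  fun _ hz hz' ↦ hL (hKL hz) (hKL hz')

theorem congr {g : X → X} (hK : IsFree h K) (hgh : EqOn h g K) : IsFree g K :=
  MapsTo.congr hK hgh

theorem union_image (hinj : Injective h) (hK : IsFree h K) (hL : IsFree h L) (hdisj : Disjoint L K)
    (hKL : ∀ z ∈ K, h (h z) ∉ L) : IsFree h (L ∪ h '' K) := by
  rintro z (hz | ⟨w, hw, rfl⟩) (hz' | ⟨w', hw', heq⟩)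
  · exact hL hz hz'
  · exact hdisj.notMem_of_mem_left hz (hinj heq ▸ hw')
  · exact hKL w hw hz'
  · exact hK hw (hinj heq ▸ hw')

variable [TopologicalSpace X]

theorem apply_notMem_closure (hB : IsFree h B) (hopen : IsOpen B) (hh : IsOpenMap h) {z : X}
    (hz : z ∈ B) : h z ∉ closure B := by
  have hdisj : Disjoint (h '' B) B := disjoint_left.2 <| forall_mem_image.2 hB
  exact (hdisj.closure_right (hh B hopen)).notMem_of_mem_left (mem_image_of_mem h hz)

theorem apply_notMem_of_mem_closure (hB : IsFree h B) (hopen : IsOpen B) (hh : Continuous h)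
    {z : X} (hz : z ∈ closure B) : h z ∉ B := by
  have hdisj : Disjoint B (h ⁻¹' B) := disjoint_left.2 hB
  exact (hdisj.closure_left (hopen.preimage hh)).notMem_of_mem_left hz

theorem insert (hB : IsFree h B) (hopen : IsOpen B) (hh : Continuous h) (hh' : IsOpenMap h) {y : X}
    (hy : y ∈ closure B) (hne : h y ≠ y) : IsFree h (insert y B) := by
  rintro z (rfl | hz) (hz' | hz')
  · exact hne hz'
  · exact hB.apply_notMem_of_mem_closure hopen hh hy hz'
  · exact hB.apply_notMem_closure hopen hh' hz (hz' ▸ hy)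
  · exact hB hz hz'

theorem exists_isOpen_superset [T2Space X] (hK : IsFree h K) (hcomp : IsCompact K)
    (hh : Continuous h) : ∃ U, IsOpen U ∧ K ⊆ U ∧ IsFree h U := by
  have hdisj : Disjoint K (h '' K) := disjoint_right.2 <| forall_mem_image.2 hK
  obtain ⟨U, V, hU, hV, hKU, hKV, hUV⟩ :=
    SeparatedNhds.of_isCompact_isCompact hcomp (hcomp.image hh) hdisj
  exact ⟨U ∩ h ⁻¹' V, hU.inter (hV.preimage hh), subset_inter hKU (image_subset_iff.1 hKV),
    fun z hz hz' ↦ hUV.notMem_of_mem_left hz'.1 hz.2⟩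

end IsFree

theorem apply_mem_of_eqOn_compl {X : Type*} {g : X → X} (hinj : Injective g) {D : Set X}
    (hg : EqOn g id Dᶜ) {z : X} (hz : z ∈ D) : g z ∈ D := by
  by_contra hgz
  exact hgz <| (hinj (hg hgz)).symm ▸ hz

theorem iterate_comp_eq_of_eqOn_compl {X : Type*} {g h : X → X} {D : Set X} (hg : EqOn g id Dᶜ)
    {x : X} {m : ℕ} (havoid : ∀ j, 0 < j → j ≤ m → h^[j] x ∉ D) : (g ∘ h)^[m] x = h^[m] x := by
  induction m with
  | zero => rfl
  | succ m ih =>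
    rw [iterate_succ_apply', ih fun j hj hjm ↦ havoid j hj (by omega), comp_apply,
      ← iterate_succ_apply' h, hg (havoid _ m.succ_pos le_rfl), id_eq]

theorem iterate_succ_comp_eq_of_eqOn_compl {X : Type*} {g h : X → X} {D : Set X}
    (hg : EqOn g id Dᶜ) {x : X} {m : ℕ} (havoid : ∀ j, 0 < j → j ≤ m → h^[j] x ∉ D) :
    (g ∘ h)^[m + 1] x = g (h^[m + 1] x) := by
  rw [iterate_succ_apply', iterate_comp_eq_of_eqOn_compl hg havoid, comp_apply,
    ← iterate_succ_apply' h]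

section NormedSpace

variable {E : Type*} [NormedAddCommGroup E] [NormedSpace ℝ E]

theorem exists_isOpen_isPreconnected_between {K U : Set E} (hK : IsCompact K)
    (hconn : IsPreconnected K) (hU : IsOpen U) (hKU : K ⊆ U) :
    ∃ D, IsOpen D ∧ IsPreconnected D ∧ K ⊆ D ∧ D ⊆ U := by
  obtain ⟨δ, hδ, hsub⟩ := hK.exists_thickening_subset_open hU hKU
  have hKδ := self_subset_thickening hδ K
  refine ⟨thickening δ K, isOpen_thickening, ?_, hKδ, hsub⟩
  refine isPreconnected_of_forall_pair fun x hx y hy ↦ ?_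
  obtain ⟨a, ha, hxa⟩ := mem_thickening_iff.1 hx
  obtain ⟨b, hb, hyb⟩ := mem_thickening_iff.1 hy
  refine ⟨ball a δ ∪ K ∪ ball b δ, ?_, .inl (.inl hxa), .inr hyb, ?_⟩
  · exact union_subset (union_subset (ball_subset_thickening ha δ) hKδ)
      (ball_subset_thickening hb δ)
  · refine IsPreconnected.union b (.inr hb) (mem_ball_self hδ) ?_ (convex_ball b δ).isPreconnected
    exact IsPreconnected.union a (mem_ball_self hδ) ha (convex_ball a δ).isPreconnected hconn

theorem isCompact_segment (x y : E) : IsCompact (segment ℝ x y) := by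
  rw [segment_eq_image_lineMap]
  exact isCompact_Icc.image AffineMap.lineMap_continuous

theorem segment_subset_insert_ball {x y : E} {r : ℝ} (hr : 0 < r) (hy : y ∈ sphere x r) :
    segment ℝ x y ⊆ insert y (ball x r) := by
  rw [segment_eq_image_lineMap]
  rintro _ ⟨t, ⟨ht₀, ht₁⟩, rfl⟩
  rcases ht₁.lt_or_eq with ht | rfl
  · refine .inr ?_
    rw [mem_ball, dist_lineMap_left, Real.norm_of_nonneg ht₀, dist_comm, mem_sphere.1 hy]
    exact mul_lt_of_lt_one_left hr ht
  · exact .inl (AffineMap.lineMap_apply_one x y)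

theorem segment_inter_segment_subset_singleton {x y p : E} (hdist : dist y x = dist p x)
    (hne : y ≠ p) : segment ℝ x y ∩ segment ℝ x p ⊆ {x} := by
  rw [segment_eq_image_lineMap, segment_eq_image_lineMap]
  rintro _ ⟨⟨t, ⟨ht, -⟩, rfl⟩, ⟨s, ⟨hs, -⟩, heq⟩⟩
  have hyx : dist x y ≠ 0 := fun h ↦ hne <| by
    rw [dist_comm, h] at hdist
    rw [← dist_eq_zero.1 h, dist_eq_zero.1 hdist.symm]
  have hst : s = t := by
    have hnorm := congrArg (dist · x) heq
    simp only [dist_lineMap_left, Real.norm_of_nonneg hs, Real.norm_of_nonneg ht,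
      dist_comm x p, ← hdist, dist_comm y x] at hnorm
    exact mul_right_cancel₀ hyx hnorm
  rcases eq_or_ne t 0 with rfl | ht₀
  · exact AffineMap.lineMap_apply_zero x y
  · subst hst
    simp only [AffineMap.lineMap_apply, vsub_eq_sub, vadd_eq_add, add_left_inj,
      smul_right_inj ht₀, sub_left_inj] at heq
    exact absurd heq.symm hne

theorem midpoint_mem_ball_of_mem_sphere {x p : E} {r : ℝ} (hr : 0 < r) (hp : p ∈ sphere x r) :
    midpoint ℝ x p ∈ ball x r := by
  rw [mem_ball, dist_midpoint_left, dist_comm, mem_sphere.1 hp, Real.norm_ofNat]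
  linarith

theorem segment_midpoint_right_subset (x p : E) :
    segment ℝ (midpoint ℝ x p) p ⊆ segment ℝ x p :=
  (convex_segment x p).segment_subset (midpoint_mem_segment x p) (right_mem_segment ℝ x p)

theorem disjoint_segment_midpoint_segment {x y p : E} (hdist : dist y x = dist p x) (hne : y ≠ p) :
    Disjoint (segment ℝ (midpoint ℝ x p) p) (segment ℝ x y) := by
  refine disjoint_left.2 fun z hzp hzy ↦ ?_
  obtain rfl : z = x := segment_inter_segment_subset_singleton hdist hne
    ⟨hzy, segment_midpoint_right_subset x p hzp⟩
  have hz : z = midpoint ℝ z p :=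
    (wbtw_midpoint ℝ z p).swap_left_iff.1 (mem_segment_iff_wbtw.1 hzp)
  obtain rfl : z = p := (left_eq_midpoint_iff ℝ).1 hz
  exact hne (dist_eq_zero.1 (by rw [hdist, dist_self]))

theorem sphere_subset_closure_ball (x : E) {r : ℝ} (hr : 0 < r) :
    sphere x r ⊆ closure (ball x r) :=
  closure_ball x hr.ne' ▸ sphere_subset_closedBall

theorem segment_subset_closure_ball {x y : E} {r : ℝ} (hr : 0 < r) (hy : y ∈ sphere x r) :
    segment ℝ x y ⊆ closure (ball x r) :=
  (segment_subset_insert_ball hr hy).trans <|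
    insert_subset (sphere_subset_closure_ball x hr hy) subset_closure

theorem IsFree.segment_of_mem_sphere {h : E ≃ₜ E} {x y : E} {r : ℝ} (hr : 0 < r)
    (hfree : IsFree h (ball x r)) (hy : y ∈ sphere x r) (hne : h y ≠ y) :
    IsFree h (segment ℝ x y) :=
  (hfree.insert isOpen_ball h.continuous h.isOpenMap (sphere_subset_closure_ball x hr hy) hne).mono
    (segment_subset_insert_ball hr hy)

theorem IsFree.segment_union_image_segment {h : E ≃ₜ E} {x y : E} {r : ℝ} (hr : 0 < r)
    (hfree : IsFree h (ball x r)) (hfree₂ : IsFree (h ∘ h) (ball x r)) (hy : y ∈ sphere x r)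
    (hhy : h y ∈ sphere x r) (hne : h y ≠ y) (hne' : h (h y) ≠ h y) :
    IsFree h (segment ℝ (midpoint ℝ x (h y)) (h y) ∪ h '' segment ℝ x y) := by
  have hhalf := segment_midpoint_right_subset x (h y)
  have hhalf_free := (hfree.segment_of_mem_sphere hr hhy hne').mono hhalf
  refine IsFree.union_image h.injective (hfree.segment_of_mem_sphere hr hy hne) hhalf_free
    (disjoint_segment_midpoint_segment (hy.trans hhy.symm) hne.symm) fun z hz hz' ↦ ?_
  rcases segment_subset_insert_ball hr hy hz with rfl | hz
  · exact hhalf_free (right_mem_segment ℝ _ _) hz'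
  · exact hfree₂.apply_notMem_closure isOpen_ball (h.isOpenMap.comp h.isOpenMap) hz
      (segment_subset_closure_ball hr hhy (hhalf hz'))

theorem IsFree.apply_notMem_ball_of_mem_segment_union {h : E ≃ₜ E} {x y : E} {r : ℝ} (hr : 0 < r)
    (hfree : IsFree h (ball x r)) (hfree₂ : IsFree (h ∘ h) (ball x r)) (hy : y ∈ sphere x r)
    (hhy : h y ∈ sphere x r) {z : E}
    (hz : z ∈ segment ℝ (midpoint ℝ x (h y)) (h y) ∪ h '' segment ℝ x y) : h z ∉ ball x r := by
  rcases hz with hz | ⟨w, hw, rfl⟩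
  · exact hfree.apply_notMem_of_mem_closure isOpen_ball h.continuous
      (segment_subset_closure_ball hr hhy (segment_midpoint_right_subset x (h y) hz))
  · exact hfree₂.apply_notMem_of_mem_closure isOpen_ball (h.continuous.comp h.continuous)
      (segment_subset_closure_ball hr hy hw)

-- The maximal free ball centred at `x` touches its image.
theorem exists_isFree_ball_mem_sphere [ProperSpace E] (h : E ≃ₜ E) {x : E} (hx : h x ≠ x) :
    ∃ r > 0, IsFree h (ball x r) ∧ ∃ y ∈ sphere x r, h y ∈ sphere x r := by
  let reach : E → ℝ := fun z ↦ max (dist z x) (dist (h z) x)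
  have hcont : Continuous reach := by fun_prop
  obtain ⟨y, hy⟩ := hcont.exists_forall_le <|
    tendsto_atTop_mono (fun z ↦ le_max_left _ _) (tendsto_dist_right_cocompact_atTop x)
  have hpos : 0 < reach y := by
    refine (le_max_of_le_left dist_nonneg).lt_of_ne' fun h₀ ↦ hx ?_
    have hyx : y = x := dist_le_zero.1 (h₀ ▸ le_max_left _ _)
    have hhy : h y = x := dist_le_zero.1 (h₀ ▸ le_max_right _ _)
    rwa [hyx] at hhy
  have hfree : IsFree h (ball x (reach y)) := fun z hz hz' ↦ (hy z).not_gt (max_lt hz hz')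
  have hclosure := closure_ball x hpos.ne'
  have hyr : dist y x ≤ reach y := le_max_left _ _
  have hhyr : dist (h y) x ≤ reach y := le_max_right _ _
  refine ⟨reach y, hpos, hfree, y, hyr.antisymm ?_, hhyr.antisymm ?_⟩
  · exact not_lt.1 fun hlt ↦
      hfree.apply_notMem_closure isOpen_ball h.isOpenMap hlt (hclosure ▸ hhyr)
  · exact not_lt.1 fun hlt ↦
      hfree.apply_notMem_of_mem_closure isOpen_ball h.continuous (hclosure ▸ hyr) hlt

end NormedSpace

/-! ### Brouwer homeomorphisms -/

/-- Brouwer homeomorphisms: orientation-preserving homeomorphisms of the plane without fixed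
points. -/
structure IsBrouwer (h : ℂ ≃ₜ ℂ) : Prop where
  hasDegree_one : HasDegree h 1
  apply_ne_self : ∀ z, h z ≠ z

namespace IsBrouwer

variable {g h : ℂ ≃ₜ ℂ} {D K : Set ℂ}

theorem trans_of_isFree (hh : IsBrouwer h) (hD : IsFree h D) (hdeg : HasDegree g 1)
    (hg : EqOn g id Dᶜ) : IsBrouwer (h.trans g) where
  hasDegree_one := hdeg.comp hh.hasDegree_one h.continuous
  apply_ne_self z hz := by
    rw [Homeomorph.trans_apply] at hz
    by_cases hhz : h z ∈ D
    · exact hD (hz ▸ apply_mem_of_eqOn_compl g.injective hg hhz) hhz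
    · exact hh.apply_ne_self z ((hg hhz).symm.trans hz)

theorem apply_apply_ne_self (hh : IsBrouwer h) (x : ℂ) : h (h x) ≠ x := fun hx ↦ by
  have := hh.hasDegree_one.eq_neg_one_of_apply_apply_eq h.continuous hh.apply_ne_self hx
  omega

-- At the first return to a neighbourhood of `K`, push the returning point back to `x`.
theorem exists_iterate_eq_self_of_iterate_mem (hh : IsBrouwer h) (hcomp : IsCompact K)
    (hconn : IsPreconnected K) (hfree : IsFree h K) {x : ℂ} (hx : x ∈ K) {i : ℕ} (hi : 0 < i)
    (hreturn : h^[i] x ∈ K) :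
    ∃ f : ℂ ≃ₜ ℂ, IsBrouwer f ∧ ∃ j, 0 < j ∧ j ≤ i ∧ f^[j] x = x := by
  obtain ⟨U, hU, hKU, hUfree⟩ := hfree.exists_isOpen_superset hcomp h.continuous
  obtain ⟨D, hD, hDconn, hKD, hDU⟩ := exists_isOpen_isPreconnected_between hcomp hconn hU hKU
  obtain ⟨m, ⟨hmi, hm⟩, hfirst⟩ : ∃ m, (m + 1 ≤ i ∧ h^[m + 1] x ∈ D) ∧
      ∀ j < m, ¬(j + 1 ≤ i ∧ h^[j + 1] x ∈ D) := by
    classical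
    have hex : ∃ m, m + 1 ≤ i ∧ h^[m + 1] x ∈ D :=
      ⟨i - 1, by omega, by rw [Nat.sub_add_cancel hi]; exact hKD hreturn⟩
    exact ⟨Nat.find hex, Nat.find_spec hex, fun _ ↦ Nat.find_min hex⟩
  have havoid : ∀ j, 0 < j → j ≤ m → h^[j] x ∉ D := fun j hj hjm hjD ↦
    hfirst (j - 1) (by omega) ⟨by omega, by rwa [Nat.sub_add_cancel hj]⟩
  obtain ⟨g, hdeg, hg, hgx⟩ :=
    exists_hasDegree_one_apply_eq_of_isPreconnected hD hDconn hm (hKD hx)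
  refine ⟨h.trans g, hh.trans_of_isFree (hUfree.mono hDU) hdeg hg, m + 1, m.succ_pos, hmi, ?_⟩
  exact (iterate_succ_comp_eq_of_eqOn_compl hg havoid).trans hgx

theorem isFree_iterate_of_isPreconnected (hh : IsBrouwer h) {k : ℕ}
    (hk : ∀ f : ℂ ≃ₜ ℂ, IsBrouwer f → ∀ j, 0 < j → j < k → ∀ x, f^[j] x ≠ x)
    (hcomp : IsCompact K) (hconn : IsPreconnected K) (hfree : IsFree h K) {i : ℕ} (hi : 0 < i)
    (hik : i < k) : IsFree h^[i] K := fun x hx hxi ↦ by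
  obtain ⟨f, hf, j, hj, hji, hfx⟩ :=
    hh.exists_iterate_eq_self_of_iterate_mem hcomp hconn hfree hx hi hxi
  exact hk f hf j hj (hji.trans_lt hik) x hfx

theorem isFree_iterate_of_convex (hh : IsBrouwer h) {k : ℕ}
    (hk : ∀ f : ℂ ≃ₜ ℂ, IsBrouwer f → ∀ j, 0 < j → j < k → ∀ x, f^[j] x ≠ x)
    (hconv : Convex ℝ D) (hfree : IsFree h D) {i : ℕ} (hi : 0 < i) (hik : i < k) :
    IsFree h^[i] D := fun x hx hxi ↦
  hh.isFree_iterate_of_isPreconnected hk (isCompact_segment x (h^[i] x))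
    (convex_segment x _).isPreconnected (hfree.mono (hconv.segment_subset hx hxi)) hi hik
    (left_mem_segment ℝ x _) (right_mem_segment ℝ x _)

-- If `x` had period `m + 3`, then pushing `x` to `b` inside the free ball would make `h x` return
-- to the free continuum `K` after only `m + 2` steps.
theorem iterate_add_three_ne_self (hh : IsBrouwer h) {m : ℕ}
    (hk : ∀ f : ℂ ≃ₜ ℂ, IsBrouwer f → ∀ j, 0 < j → j < m + 3 → ∀ x, f^[j] x ≠ x) (x : ℂ) :
    h^[m + 3] x ≠ x := fun hx ↦ by
  obtain ⟨r, hr, hfree, y, hy, hhy⟩ := exists_isFree_ball_mem_sphere h (hh.apply_ne_self x)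
  have hfree_iterate : ∀ i, 0 < i → i < m + 3 → IsFree h^[i] (ball x r) := fun i ↦
    hh.isFree_iterate_of_convex hk (convex_ball x r) hfree
  have hfree₂ : IsFree (h ∘ h) (ball x r) := hfree_iterate 2 (by omega) (by omega)
  let b := midpoint ℝ x (h y)
  let K := segment ℝ b (h y) ∪ h '' segment ℝ x y
  have hKfree : IsFree h K := hfree.segment_union_image_segment hr hfree₂ hy hhy
    (hh.apply_ne_self y) (hh.apply_ne_self (h y))
  have hKcomp : IsCompact K :=
    (isCompact_segment _ _).union ((isCompact_segment x y).image h.continuous)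
  have hKconn : IsPreconnected K := IsPreconnected.union (h y) (right_mem_segment ℝ _ _)
    (mem_image_of_mem h (right_mem_segment ℝ x y)) (convex_segment _ _).isPreconnected
    ((convex_segment x y).isPreconnected.image h h.continuous.continuousOn)
  obtain ⟨g, hdeg, hg, hgx⟩ := exists_hasDegree_one_apply_eq_of_isPreconnected isOpen_ball
    (convex_ball x r).isPreconnected (mem_ball_self hr) (midpoint_mem_ball_of_mem_sphere hr hhy)
  have hgh : IsBrouwer (h.trans g) := hh.trans_of_isFree hfree hdeg hg
  have hgh_free : IsFree (h.trans g) K := hKfree.congr fun z hz ↦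
    (hg (hfree.apply_notMem_ball_of_mem_segment_union hr hfree₂ hy hhy hz)).symm
  have hreturn : (h.trans g)^[m + 2] (h x) = b := by
    have havoid : ∀ j, 0 < j → j ≤ m + 1 → h^[j] (h x) ∉ ball x r := fun j _ hjm ↦
      hfree_iterate (j + 1) (by omega) (by omega) (mem_ball_self hr)
    calc (g ∘ h)^[m + 2] (h x) = g (h^[m + 3] x) := iterate_succ_comp_eq_of_eqOn_compl hg havoid
      _ = b := by rw [hx, hgx]
  refine hgh.isFree_iterate_of_isPreconnected hk hKcomp hKconn hgh_free (i := m + 2) (by omega)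
    (by omega) (.inr (mem_image_of_mem h (left_mem_segment ℝ x y))) ?_
  exact hreturn ▸ .inl (left_mem_segment ℝ b (h y))

theorem iterate_ne_self (hh : IsBrouwer h) {k : ℕ} (hk : 0 < k) (x : ℂ) : h^[k] x ≠ x := by
  induction k using Nat.strong_induction_on generalizing h x with
  | _ k ih =>
    match k, hk with
    | 1, _ => exact hh.apply_ne_self x
    | 2, _ => exact hh.apply_apply_ne_self x
    | m + 3, _ => exact hh.iterate_add_three_ne_self (fun f hf j hj hjm ↦ ih j hjm hf hj) x

theorem exists_mem_nhds_isFree_iterate (hh : IsBrouwer h) (x : ℂ) :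
    ∃ W ∈ 𝓝 x, ∀ k, 0 < k → IsFree h^[k] W := by
  have hx : IsFree h {x} := fun z hz hz' ↦ hh.apply_ne_self x (by rwa [hz] at hz')
  obtain ⟨U, hU, hxU, hUfree⟩ := hx.exists_isOpen_superset isCompact_singleton h.continuous
  obtain ⟨r, hr, hball⟩ := Metric.isOpen_iff.1 hU x (hxU rfl)
  exact ⟨ball x r, ball_mem_nhds x hr, fun k hk ↦ hh.isFree_iterate_of_convex
    (fun f hf j hj _ ↦ hf.iterate_ne_self hj) (convex_ball x r) (hUfree.mono hball) hk
    k.lt_succ_self⟩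

end IsBrouwer

/-! ### Minimal actions -/

section Minimal

open scoped Pointwise

variable {G X : Type*} [TopologicalSpace X]

theorem vadd_eq_self_of_isMinimal [AddCommMonoid G] [AddAction G X] [ContinuousConstVAdd G X]
    [AddAction.IsMinimal G X] [T2Space X] {n : G} {x : X} (hx : n +ᵥ x = x) (y : X) :
    n +ᵥ y = y :=
  (denseRange_vadd G x).induction_on y (isClosed_eq (continuous_const_vadd n) continuous_id)
    fun m ↦ by rw [vadd_comm, hx]

theorem zmultiples_le_stabilizer_of_isMinimal [AddCommGroup G] [AddAction G X]
    [ContinuousConstVAdd G X] [AddAction.IsMinimal G X] [T2Space X] {n : G} {x : X}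
    (hx : n +ᵥ x = x) (y : X) : AddSubgroup.zmultiples n ≤ AddAction.stabilizer G y :=
  AddSubgroup.zmultiples_le_of_mem (vadd_eq_self_of_isMinimal hx y)

variable [AddGroup G] [AddAction G X] [ContinuousConstVAdd G X] [AddAction.IsMinimal G X]
  [BaireSpace X]

theorem nonempty_interior_closure_orbit_of_finiteIndex (H : AddSubgroup G) [H.FiniteIndex]
    (x : X) : (interior (closure (AddAction.orbit H x))).Nonempty := by
  have : Nonempty X := ⟨x⟩
  let translate : G ⧸ H → Set X := fun q ↦ q.out +ᵥ closure (AddAction.orbit H x)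
  have hclosed : ∀ q, IsClosed (translate q) := fun q ↦ isClosed_closure.vadd q.out
  have hcover : ⋃ q, translate q = univ := by
    refine (isClosed_iUnion_of_finite hclosed).closure_eq ▸
      ((AddAction.dense_orbit G x).mono ?_).closure_eq
    rintro _ ⟨m, rfl⟩
    obtain ⟨h, hout⟩ := QuotientAddGroup.mk_out_eq_add H m
    refine mem_iUnion.2 ⟨m, -h +ᵥ x, subset_closure (AddAction.mem_orbit x (-h)), ?_⟩
    simp [hout, add_vadd, AddSubgroup.vadd_def]
  obtain ⟨q, hq⟩ := nonempty_interior_of_iUnion_of_closed hclosed hcover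
  rw [interior_vadd] at hq
  exact hq.of_image

theorem mem_interior_closure_orbit_of_finiteIndex (H : AddSubgroup G) [H.FiniteIndex] (x : X) :
    x ∈ interior (closure (AddAction.orbit H x)) := by
  have : ContinuousConstVAdd H X := ⟨fun h ↦ continuous_const_vadd (h : G)⟩
  obtain ⟨y, hy⟩ := nonempty_interior_closure_orbit_of_finiteIndex H x
  obtain ⟨_, ⟨h, rfl⟩, hh⟩ :=
    (closure_inter_open_nonempty_iff isOpen_interior).1 ⟨y, interior_subset hy, hy⟩
  refine interior_mono (vadd_closure_orbit_subset (-h) x) ?_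
  rw [interior_vadd]
  exact mem_vadd_set_iff_neg_vadd_mem.2 (by rwa [neg_neg])

theorem accPt_orbit_of_finiteIndex [T1Space X] (H : AddSubgroup G) [H.FiniteIndex] (x : X)
    [(𝓝[≠] x).NeBot] : AccPt x (𝓟 (AddAction.orbit H x)) := by
  have hnhds : closure (AddAction.orbit H x) ∈ 𝓝[≠] x := mem_nhdsWithin_of_mem_nhds <|
    mem_interior_iff_mem_nhds.1 (mem_interior_closure_orbit_of_finiteIndex H x)
  have hclosure : AccPt x (𝓟 (closure (AddAction.orbit H x))) :=
    accPt_iff_frequently_nhdsNE.2 (Eventually.frequently hnhds)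
  exact (derivedSet_closure (AddAction.orbit H x)).subset hclosure

end Minimal

theorem finiteIndex_of_forall_zsmul_mem {A : Type*} [AddCommGroup A] [AddGroup.FG A]
    {H : AddSubgroup A} {d : ℤ} (hd : d ≠ 0) (hH : ∀ a, d • a ∈ H) : H.FiniteIndex := by
  have htorsion : IsAddTorsion (A ⧸ H) := fun q ↦ by
    induction q using QuotientAddGroup.induction_on with
    | H a =>
      refine isOfFinAddOrder_iff_zsmul_eq_zero.2 ⟨d, hd, ?_⟩
      exact (QuotientAddGroup.eq_zero_iff (d • a)).2 (hH a)
  have : Finite (A ⧸ H) := AddCommGroup.finite_of_fg_isAddTorsion _ htorsion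
  exact AddSubgroup.finiteIndex_of_finite_quotient

theorem finiteIndex_zmultiples_sup_zmultiples {n w : ℤ × ℤ} (hdet : n.1 * w.2 - n.2 * w.1 ≠ 0) :
    (AddSubgroup.zmultiples n ⊔ AddSubgroup.zmultiples w).FiniteIndex := by
  refine finiteIndex_of_forall_zsmul_mem hdet fun m ↦ ?_
  have hcramer : (n.1 * w.2 - n.2 * w.1) • m =
      (m.1 * w.2 - m.2 * w.1) • n + (n.1 * m.2 - n.2 * m.1) • w := by
    ext <;>
    simp only [Prod.smul_fst, Prod.smul_snd, Prod.fst_add, Prod.snd_add, smul_eq_mul] <;>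
    ring
  rw [hcramer]
  exact AddSubgroup.add_mem_sup (AddSubgroup.zsmul_mem_zmultiples n _)
    (AddSubgroup.zsmul_mem_zmultiples w _)

section Plane

variable {G : Type*}

theorem IsBrouwer.not_accPt_orbit_zmultiples [AddGroup G] [AddAction G ℂ]
    [ContinuousConstVAdd G ℂ] {w : G} (hw : IsBrouwer (Homeomorph.vadd w)) (x : ℂ) :
    ¬AccPt x (𝓟 (AddAction.orbit (AddSubgroup.zmultiples w) x)) := fun hacc ↦ by
  obtain ⟨W, hW, hfree⟩ := hw.exists_mem_nhds_isFree_iterate x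
  have hfree_nsmul : ∀ {k : ℕ} {z : ℂ}, 0 < k → z ∈ W → k • w +ᵥ z ∉ W := fun {k z} hk hz ↦ by
    have hiterate : (Homeomorph.vadd w)^[k] z = k • w +ᵥ z := congrFun (vadd_iterate w k) z
    exact hiterate ▸ hfree k hk hz
  obtain ⟨_, ⟨hyW, ⟨⟨_, q, rfl⟩, rfl⟩⟩, hne⟩ := accPt_iff_nhds.1 hacc W hW
  have hxW : x ∈ W := mem_of_mem_nhds hW
  change q • w +ᵥ x ∈ W at hyW
  change q • w +ᵥ x ≠ x at hne
  have hq : q ≠ 0 := fun hq ↦ hne (by rw [hq, zero_smul, zero_vadd])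
  rcases q.eq_nat_or_neg with ⟨k, rfl | rfl⟩
  · exact hfree_nsmul (by omega) hxW (natCast_zsmul w k ▸ hyW)
  · refine hfree_nsmul (k := k) (by omega) hyW ?_
    rwa [neg_zsmul, natCast_zsmul, vadd_neg_vadd]

theorem vadd_ne_self_of_finiteIndex [AddCommGroup G] [AddAction G ℂ] [ContinuousConstVAdd G ℂ]
    [AddAction.IsMinimal G ℂ] {n w : G} (hw : HasDegree (Homeomorph.vadd w : ℂ ≃ₜ ℂ) 1)
    (hindex : (AddSubgroup.zmultiples n ⊔ AddSubgroup.zmultiples w).FiniteIndex) (x : ℂ) :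
    n +ᵥ x ≠ x := fun hx ↦ by
  have horbit : AddAction.orbit ↥(AddSubgroup.zmultiples n ⊔ AddSubgroup.zmultiples w) x ⊆
      AddAction.orbit (AddSubgroup.zmultiples w) x := by
    rintro _ ⟨⟨_, hm⟩, rfl⟩
    obtain ⟨a, ha, b, hb, rfl⟩ := AddSubgroup.mem_sup.1 hm
    have hab : (a + b) +ᵥ x = b +ᵥ x :=
      (add_vadd a b x).trans (zmultiples_le_stabilizer_of_isMinimal hx (b +ᵥ x) ha)
    exact ⟨⟨b, hb⟩, hab.symm⟩
  have hacc : AccPt x (𝓟 (AddAction.orbit (AddSubgroup.zmultiples w) x)) :=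
    (accPt_orbit_of_finiteIndex _ x).mono (principal_mono.2 horbit)
  refine IsBrouwer.not_accPt_orbit_zmultiples ⟨hw, fun z hz ↦ ?_⟩ x hacc
  obtain ⟨_, ⟨-, ⟨⟨m, hm⟩, rfl⟩⟩, hne⟩ := accPt_iff_nhds.1 hacc univ univ_mem
  exact hne (zmultiples_le_stabilizer_of_isMinimal hz x hm)

theorem hasDegree_vadd_add_self [AddGroup G] [AddAction G ℂ] [ContinuousConstVAdd G ℂ] (u : G) :
    HasDegree (Homeomorph.vadd (u + u) : ℂ ≃ₜ ℂ) 1 := by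
  have hcomp : ⇑(Homeomorph.vadd (u + u) : ℂ ≃ₜ ℂ) = Homeomorph.vadd u ∘ Homeomorph.vadd u :=
    funext fun z ↦ add_vadd u u z
  exact hcomp ▸ HasDegree.homeomorph_comp_self _

end Plane

theorem vadd_ne_self_of_isMinimal_int_prod [AddAction (ℤ × ℤ) ℂ] [ContinuousConstVAdd (ℤ × ℤ) ℂ]
    [AddAction.IsMinimal (ℤ × ℤ) ℂ] {n : ℤ × ℤ} (hn : n ≠ 0) (x : ℂ) : n +ᵥ x ≠ x := by
  let u : ℤ × ℤ := (-n.2, n.1)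
  refine vadd_ne_self_of_finiteIndex (hasDegree_vadd_add_self u)
    (finiteIndex_zmultiples_sup_zmultiples fun hdet ↦ hn ?_) x
  have hnorm : n.1 ^ 2 + n.2 ^ 2 = 0 := by
    simp only [u, Prod.fst_add, Prod.snd_add] at hdet
    linarith
  ext
  · exact pow_eq_zero_iff two_ne_zero |>.1 (by nlinarith)
  · exact pow_eq_zero_iff two_ne_zero |>.1 (by nlinarith)

/-- A minimal action of ℤ² on the plane by homeomorphisms is free: if every orbit of the
action `φ` (a group homomorphism from `ℤ × ℤ` to the homeomorphism group of `ℝ²`, encoded by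
`φ (m + n) = φ m ∘ φ n`) is dense, then for every `n ≠ (0, 0)` the homeomorphism `φ n` has
no fixed point. -/
theorem minimal_Z2_action_is_free
    (φ : ℤ × ℤ → ((ℝ × ℝ) ≃ₜ (ℝ × ℝ)))
    (hφ : ∀ m n : ℤ × ℤ, φ (m + n) = (φ n).trans (φ m))
    (hmin : ∀ x : ℝ × ℝ, Dense (Set.range fun n : ℤ × ℤ => φ n x)) :
    ∀ n : ℤ × ℤ, n ≠ (0, 0) → ∀ x : ℝ × ℝ, φ n x ≠ x := by
  intro n hn x hx
  let e : ℂ ≃ₜ ℝ × ℝ := equivRealProdCLM.toHomeomorph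
  have hφ_zero : ∀ y, φ 0 y = y := fun y ↦ (φ 0).injective <| by
    rw [← Homeomorph.trans_apply, ← hφ, add_zero]
  let _ : AddAction (ℤ × ℤ) ℂ :=
    { vadd m z := e.symm (φ m (e z))
      zero_vadd z := e.symm_apply_eq.2 (hφ_zero (e z))
      add_vadd m m' z := congrArg e.symm <| by
        rw [hφ, Homeomorph.trans_apply]
        exact congrArg (φ m) (e.apply_symm_apply _).symm }
  have : ContinuousConstVAdd (ℤ × ℤ) ℂ :=
    ⟨fun m ↦ e.symm.continuous.comp ((φ m).continuous.comp e.continuous)⟩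
  have : AddAction.IsMinimal (ℤ × ℤ) ℂ :=
    ⟨fun z ↦ e.symm.surjective.denseRange.comp (hmin (e z)) e.symm.continuous⟩
  refine vadd_ne_self_of_isMinimal_int_prod hn (e.symm x) (congrArg e.symm ?_)
  rw [e.apply_symm_apply, hx]
end

section
/- Let g be a homeomorphism of ℝ² and p ≥ 1 an integer such that g^p is the translation z ↦ z + v by some nonzero vector v ∈ ℝ². Then the ℤ-action generated by g is free and properly discontinuous: for every n ≠ 0 the map gⁿ has no fixed point, and every point of ℝ² has an open neighborhood U such that gⁿ(U) ∩ U = ∅ for all n ≠ 0. -/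
/-!
Suppose the graphs of the powers `gⁿ`, `n ∈ ℤ`, of a homeomorphism `g` of a Hausdorff space `X`
form a locally finite family of subsets of `X × X`. A fixed point `x` of
some `gⁿ` with `n ≠ 0` would put `(x, x)` on infinitely many graphs, so the action is free; and the
union of the graphs of the `gⁿ` with `n ≠ 0` is then a closed set missing `(x, x)`, so some
`U × U` with `x ∈ U` misses it, which says `gⁿ(U) ∩ U = ∅`.

Local finiteness passes from `gᵖ` to `g`: writing `n = qp + r` with `0 ≤ r < p`, the graph of `gⁿ`
is the preimage of the graph of `(gᵖ)^q` under `(x, y) ↦ (gʳ x, y)`, so the family splits into `p`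
locally finite ones. For a translation by `v ≠ 0` it holds because `ℤv` is closed and discrete.
-/

open Function Topology

section LocallyFinite

variable {ι κ X : Type*} [TopologicalSpace X]

theorem locallyFinite_prod_of_finite [Finite κ] {s : ι × κ → Set X}
    (hs : ∀ k, LocallyFinite fun i => s (i, k)) : LocallyFinite s := by
  intro x
  choose t ht hfin using fun k => hs k x
  refine ⟨⋂ k, t k, Filter.iInter_mem.2 ht, ?_⟩
  refine (Set.finite_iUnion fun k => (hfin k).image (·, k)).subset ?_
  rintro ⟨i, k⟩ hik
  exact Set.mem_iUnion.2 ⟨k, i, hik.mono (Set.inter_subset_inter_right _ (Set.iInter_subset t k)),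
    rfl⟩

theorem locallyFinite_singleton_of_isClosedEmbedding [TopologicalSpace ι] [DiscreteTopology ι]
    {f : ι → X} (hf : IsClosedEmbedding f) : LocallyFinite fun i => ({f i} : Set X) := by
  intro x
  have hclosed : IsClosed (f '' {i | f i ≠ x}) := hf.isClosedMap _ (isClosed_discrete _)
  refine ⟨(f '' {i | f i ≠ x})ᶜ, hclosed.isOpen_compl.mem_nhds (by simp), ?_⟩
  refine ((Set.finite_singleton x).preimage hf.injective.injOn).subset fun i hi => ?_
  by_contra hix
  exact Set.singleton_inter_nonempty.1 hi ⟨i, hix, rfl⟩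

theorem exists_isOpen_forall_image_inter_eq_empty [T2Space X] {φ : ι → X → X}
    (hφ : ∀ i, Continuous (φ i)) (hgraph : LocallyFinite fun i => (φ i).graph) {x : X}
    (hx : ∀ i, φ i x ≠ x) :
    ∃ U : Set X, IsOpen U ∧ x ∈ U ∧ ∀ i, φ i '' U ∩ U = ∅ := by
  have hclosed : IsClosed (⋃ i, (φ i).graph) :=
    hgraph.isClosed_iUnion fun i => isClosed_eq ((hφ i).comp continuous_fst) continuous_snd
  have hxx : (x, x) ∉ ⋃ i, (φ i).graph := by simpa using hx
  obtain ⟨V, W, hV, hW, hxV, hxW, hVW⟩ :=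
    isOpen_prod_iff.1 hclosed.isOpen_compl x x hxx
  refine ⟨V ∩ W, hV.inter hW, ⟨hxV, hxW⟩, fun i => Set.eq_empty_iff_forall_notMem.2 ?_⟩
  rintro _ ⟨⟨y, hy, rfl⟩, hφy⟩
  exact hVW (Set.mk_mem_prod hy.1 hφy.2) (Set.mem_iUnion.2 ⟨i, rfl⟩)

end LocallyFinite

section Powers

variable {X : Type*} [TopologicalSpace X]

theorem continuous_toEquiv_zpow (g : X ≃ₜ X) : ∀ n : ℤ, Continuous (g.toEquiv ^ n)
  | .ofNat n => by
    simpa [Equiv.Perm.coe_pow] using g.continuous.iterate n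
  | .negSucc n => by
    rw [zpow_negSucc, ← inv_pow, Equiv.Perm.coe_pow]
    exact g.symm.continuous.iterate (n + 1)

theorem zpow_apply_ne_self_of_locallyFinite_graph {g : Equiv.Perm X}
    (hg : LocallyFinite fun n : ℤ => (⇑(g ^ n)).graph) {n : ℤ} (hn : n ≠ 0) (x : X) :
    (g ^ n) x ≠ x := by
  intro hx
  refine Set.infinite_of_injective_forall_mem (mul_right_injective₀ hn) (fun k => ?_)
    (hg.point_finite (x, x))
  change (g ^ (n * k)) x = x
  rw [zpow_mul, Equiv.Perm.zpow_apply_eq_self_of_apply_eq_self hx]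

theorem locallyFinite_graph_zpow_of_pow (g : X ≃ₜ X) {p : ℕ} (hp : p ≠ 0)
    (hgp : LocallyFinite fun q : ℤ => (⇑((g.toEquiv ^ p) ^ q)).graph) :
    LocallyFinite fun n : ℤ => (⇑(g.toEquiv ^ n)).graph := by
  have : NeZero p := ⟨hp⟩
  rw [← (Int.divModEquiv p).symm.locallyFinite_comp_iff]
  refine locallyFinite_prod_of_finite fun r => ?_
  have hcont : Continuous (Prod.map (g.toEquiv ^ (r : ℤ)) (id : X → X)) :=
    (continuous_toEquiv_zpow g r).prodMap continuous_id
  refine (hgp.preimage_continuous hcont).subset fun q z hz => ?_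
  have hpow : g.toEquiv ^ (q * p + r : ℤ) = (g.toEquiv ^ p) ^ q * g.toEquiv ^ (r : ℤ) := by
    rw [zpow_add, mul_comm q, zpow_mul, zpow_natCast]
  change ((g.toEquiv ^ p) ^ q * g.toEquiv ^ (r : ℤ)) z.1 = z.2
  rw [← hpow]
  exact hz

end Powers

section Translations

theorem locallyFinite_graph_zpow_addRight {A : Type*} [AddGroup A] [TopologicalSpace A]
    [IsTopologicalAddGroup A] {v : A} (hv : LocallyFinite fun n : ℤ => ({n • v} : Set A)) :
    LocallyFinite fun n : ℤ => (⇑(Equiv.addRight v ^ n)).graph := by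
  refine (hv.preimage_continuous (continuous_fst.neg.add continuous_snd)).subset ?_
  rintro n ⟨x, y⟩ hxy
  have hy : x + n • v = y := by simpa [Equiv.zsmul_addRight] using hxy
  simp [← hy]

variable {E : Type*} [AddCommGroup E] [Module ℝ E] [TopologicalSpace E]
  [IsTopologicalAddGroup E] [ContinuousSMul ℝ E] [T2Space E]

theorem locallyFinite_singleton_zsmul {v : E} (hv : v ≠ 0) :
    LocallyFinite fun n : ℤ => ({n • v} : Set E) := by
  simpa only [comp_def, Int.cast_smul_eq_zsmul] using locallyFinite_singleton_of_isClosedEmbedding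
    ((isClosedEmbedding_smul_left (𝕜 := ℝ) hv).comp Int.isClosedEmbedding_coe_real)

theorem free_properly_discontinuous_of_pow_eq_translation_general
    (g : E ≃ₜ E) (p : ℕ) (v : E) (hv : v ≠ 0)
    (hgp : ∀ z : E, (g.toEquiv ^ p) z = z + v) :
    (∀ n : ℤ, n ≠ 0 → ∀ x : E, (g.toEquiv ^ n) x ≠ x) ∧
    (∀ x : E, ∃ U : Set E, IsOpen U ∧ x ∈ U ∧
      ∀ n : ℤ, n ≠ 0 → (⇑(g.toEquiv ^ n) '' U) ∩ U = ∅) := by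
  have hp : p ≠ 0 := by
    rintro rfl
    exact hv (by simpa using (hgp 0).symm)
  have htranslation : g.toEquiv ^ p = Equiv.addRight v := Equiv.ext hgp
  have hgraph : LocallyFinite fun n : ℤ => (⇑(g.toEquiv ^ n)).graph := by
    apply locallyFinite_graph_zpow_of_pow g hp
    rw [htranslation]
    exact locallyFinite_graph_zpow_addRight (locallyFinite_singleton_zsmul hv)
  have hfree : ∀ n : ℤ, n ≠ 0 → ∀ x : E, (g.toEquiv ^ n) x ≠ x :=
    fun n hn => zpow_apply_ne_self_of_locallyFinite_graph hgraph hn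
  refine ⟨hfree, fun x => ?_⟩
  simpa using exists_isOpen_forall_image_inter_eq_empty
    (φ := fun n : {n : ℤ // n ≠ 0} => g.toEquiv ^ n.1) (fun n => continuous_toEquiv_zpow g n)
    (hgraph.comp_injective Subtype.val_injective) (fun n => hfree n n.2 x)

end Translations

/-- If some power `g ^ p` (with `p ≥ 1`) of a homeomorphism `g` of the plane is the
translation by a nonzero vector `v`, then the ℤ-action generated by `g` is free and
properly discontinuous: every nontrivial iterate `g ^ n` is fixed point free, and every
point has an open neighborhood `U` with `g ^ n '' U ∩ U = ∅` for all `n ≠ 0`. -/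
theorem free_properly_discontinuous_of_pow_eq_translation
    (g : (ℝ × ℝ) ≃ₜ (ℝ × ℝ)) (p : ℕ) (hp : 1 ≤ p) (v : ℝ × ℝ) (hv : v ≠ 0)
    (hgp : ∀ z : ℝ × ℝ, (g.toEquiv ^ p) z = z + v) :
    (∀ n : ℤ, n ≠ 0 → ∀ x : ℝ × ℝ, (g.toEquiv ^ n) x ≠ x) ∧
    (∀ x : ℝ × ℝ, ∃ U : Set (ℝ × ℝ), IsOpen U ∧ x ∈ U ∧
      ∀ n : ℤ, n ≠ 0 → (⇑(g.toEquiv ^ n) '' U) ∩ U = ∅) := by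
  exact free_properly_discontinuous_of_pow_eq_translation_general g p v hv hgp
end

section
/- Let h be a homeomorphism of ℝ² whose positive singular set is nonempty, and let φ be a minimal action of ℤ² on ℝ² by homeomorphisms such that φ(n) commutes with h for every n ∈ ℤ × ℤ. Then the positive singular set of h is dense in ℝ². -/
/-- `(x, y)` is a singular couple for a homeomorphism `h` of the plane: there are points
`z k → x` and positive integers `n k → +∞` with `h ^ (n k) (z k) → y`. -/
def SingularCouple (h : (ℝ × ℝ) ≃ₜ (ℝ × ℝ)) (x y : ℝ × ℝ) : Prop :=
  ∃ z : ℕ → ℝ × ℝ, ∃ n : ℕ → ℕ, (∀ k, 0 < n k) ∧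
    Filter.Tendsto z Filter.atTop (nhds x) ∧
    Filter.Tendsto n Filter.atTop Filter.atTop ∧
    Filter.Tendsto (fun k => (h.toEquiv ^ n k) (z k)) Filter.atTop (nhds y)

/-- The positive singular set of `h`: points `x` such that `(x, y)` is a singular couple
for some `y`. -/
def PositiveSingularSet (h : (ℝ × ℝ) ≃ₜ (ℝ × ℝ)) : Set (ℝ × ℝ) :=
  {x | ∃ y : ℝ × ℝ, SingularCouple h x y}

/-- The singular couples of an arbitrary self-map `f` of a topological space, written with iterates
`f^[n]` so that invertibility is not required. For a homeomorphism of the plane this is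
`SingularCouple`. -/
def IsSingularPair {X : Type*} [TopologicalSpace X] (f : X → X) (x y : X) : Prop :=
  ∃ z : ℕ → X, ∃ n : ℕ → ℕ, (∀ k, 0 < n k) ∧
    Filter.Tendsto z Filter.atTop (nhds x) ∧
    Filter.Tendsto n Filter.atTop Filter.atTop ∧
    Filter.Tendsto (fun k => f^[n k] (z k)) Filter.atTop (nhds y)

/-- The first components of the singular pairs of a self-map `f`: the counterpart of
`PositiveSingularSet` on an arbitrary topological space. -/
def positiveSingularPoints {X : Type*} [TopologicalSpace X] (f : X → X) : Set X :=
  {x | ∃ y, IsSingularPair f x y}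

section Semiconj

variable {X Y : Type*} [TopologicalSpace X] [TopologicalSpace Y] {f : X → X} {f' : Y → Y}
  {g : X → Y}

theorem IsSingularPair.map {x y : X} (hxy : IsSingularPair f x y) (hg : Continuous g)
    (hsemi : Function.Semiconj g f f') : IsSingularPair f' (g x) (g y) := by
  obtain ⟨z, n, hpos, hz, hn, hy⟩ := hxy
  refine ⟨g ∘ z, n, hpos, (hg.tendsto x).comp hz, hn, ?_⟩
  have iterate_comm (k : ℕ) : g (f^[n k] (z k)) = f'^[n k] (g (z k)) :=
    (hsemi.iterate_right (n k)).eq (z k)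
  exact ((hg.tendsto y).comp hy).congr iterate_comm

theorem mapsTo_positiveSingularPoints (hg : Continuous g) (hsemi : Function.Semiconj g f f') :
    Set.MapsTo g (positiveSingularPoints f) (positiveSingularPoints f') :=
  fun _ ⟨y, hxy⟩ => ⟨g y, hxy.map hg hsemi⟩

end Semiconj

theorem dense_positiveSingularSet_of_minimal_commuting_action_general
    {X ι : Type*} [TopologicalSpace X] {f : X → X} {φ : ι → X → X}
    (hcont : ∀ i, Continuous (φ i)) (hcomm : ∀ i, Function.Commute (φ i) f)
    {x : X} (hx : x ∈ positiveSingularPoints f) (hdense : Dense (Set.range fun i => φ i x)) :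
    Dense (positiveSingularPoints f) :=
  hdense.mono <| Set.range_subset_iff.2 fun i =>
    mapsTo_positiveSingularPoints (hcont i) (hcomm i) hx

theorem singularCouple_iff_isSingularPair {h : (ℝ × ℝ) ≃ₜ (ℝ × ℝ)} {x y : ℝ × ℝ} :
    SingularCouple h x y ↔ IsSingularPair h x y := by
  simp only [SingularCouple, IsSingularPair, Equiv.Perm.coe_pow, Homeomorph.coe_toEquiv]

theorem positiveSingularSet_eq_positiveSingularPoints (h : (ℝ × ℝ) ≃ₜ (ℝ × ℝ)) :
    PositiveSingularSet h = positiveSingularPoints h :=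
  Set.ext fun _ => exists_congr fun _ => singularCouple_iff_isSingularPair

/-- If `h` has a nonempty positive singular set and `φ` is a minimal ℤ²-action on the plane
by homeomorphisms commuting with `h` (the action, a group homomorphism, is encoded by
`φ (m + n) = φ m ∘ φ n`), then the positive singular set of `h` is dense in the plane. -/
theorem dense_positiveSingularSet_of_minimal_commuting_action
    (h : (ℝ × ℝ) ≃ₜ (ℝ × ℝ)) (hne : (PositiveSingularSet h).Nonempty)
    (φ : ℤ × ℤ → ((ℝ × ℝ) ≃ₜ (ℝ × ℝ)))
    (hφ : ∀ m n : ℤ × ℤ, φ (m + n) = (φ n).trans (φ m))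
    (hmin : ∀ x : ℝ × ℝ, Dense (Set.range fun n : ℤ × ℤ => φ n x))
    (hcomm : ∀ n : ℤ × ℤ, ∀ z : ℝ × ℝ, φ n (h z) = h (φ n z)) :
    Dense (PositiveSingularSet h) := by
  rw [positiveSingularSet_eq_positiveSingularPoints] at hne ⊢
  exact dense_positiveSingularSet_of_minimal_commuting_action_general
    (fun n => (φ n).continuous) hcomm hne.some_mem (hmin hne.some)
end
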